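/- Suppose y* ∈ C¹_rd(𝕋;ℝⁿ) is a weak local minimizer of the sigma-form functional 𝓛σ[y] = ∫_a^b L(t, y(σ(t)), y^Δ(t)) Δt with the right endpoint free: there is δ > 0 such that 𝓛σ[y*] ≤ 𝓛σ[y] for every y ∈ C¹_rd(𝕋;ℝⁿ) with y(a) = y*(a) and ‖y − y*‖_{1,∞} < δ (no condition at t = b). Then the transversality condition μ(ρ(b))·L_y(ρ(b), y*(b), y*^Δ(ρ(b))) + L_v(ρ(b), y*(b), y*^Δ(ρ(b))) = 0 holds (note σ(ρ(b)) = b). -/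

import Mathlib

open Set Filter

noncomputable section

-- Forward jump operator of the set `S`.
open Classical in
def tsSigma (S : Set ℝ) (t : ℝ) : ℝ :=
  if ({s | s ∈ S ∧ t < s}).Nonempty then sInf {s | s ∈ S ∧ t < s} else t

-- Backward jump operator of the set `S`.
open Classical in
def tsRho (S : Set ℝ) (t : ℝ) : ℝ :=
  if ({s | s ∈ S ∧ s < t}).Nonempty then sSup {s | s ∈ S ∧ s < t} else t

/-- Graininess function. -/
def tsMu (S : Set ℝ) (t : ℝ) : ℝ := tsSigma S t - t

/-- `S^k = S \ (ρ(max S), max S]`. -/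
def tsTk (S : Set ℝ) : Set ℝ := S \ Set.Ioc (tsRho S (sSup S)) (sSup S)

/-- Delta differentiability at `t` of `f` regarded as a function on the time scale `S`,
with delta derivative `d`. -/
def deltaDiffAt {E : Type*} [NormedAddCommGroup E] [NormedSpace ℝ E]
    (S : Set ℝ) (f : ℝ → E) (t : ℝ) (d : E) : Prop :=
  ∀ ε > 0, ∃ δ > 0, ∀ s ∈ S ∩ Set.Ioo (t - δ) (t + δ),
    ‖f (tsSigma S t) - f s - (tsSigma S t - s) • d‖ ≤ ε * |tsSigma S t - s|

/-- rd-continuity of `f` on its domain `S`: continuity (within `S`) at right-dense points and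
existence of a finite left-sided limit along `S` at left-dense points. -/
def RdContinuousOn {E : Type*} [NormedAddCommGroup E]
    (S : Set ℝ) (f : ℝ → E) : Prop :=
  ∀ t ∈ S, (tsSigma S t = t → ContinuousWithinAt f S t) ∧
    (tsRho S t = t → ∃ l : E, Filter.Tendsto f (nhdsWithin t (S ∩ Set.Iio t)) (nhds l))

/-- `y ∈ C¹_rd(T)`, with delta derivative `yd`. -/
def C1rd {E : Type*} [NormedAddCommGroup E] [NormedSpace ℝ E]
    (T : Set ℝ) (y yd : ℝ → E) : Prop :=
  (∀ t ∈ tsTk T, deltaDiffAt T y t (yd t)) ∧ RdContinuousOn (tsTk T) yd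

/-- `F` is a delta antiderivative of `f` on the time scale `S`; the delta integral
`∫_c^d f Δt` is `F d - F c` for any such `F`. -/
def IsDeltaAntideriv {E : Type*} [NormedAddCommGroup E] [NormedSpace ℝ E]
    (S : Set ℝ) (f F : ℝ → E) : Prop :=
  ∀ t ∈ tsTk S, deltaDiffAt S F t (f t)

/-- Sup norm of `f` over the set `S`. -/
def tsSupNorm {E : Type*} [NormedAddCommGroup E] (S : Set ℝ) (f : ℝ → E) : ℝ :=
  sSup ((fun t => ‖f t‖) '' S)

abbrev En (n : ℕ) : Type := EuclideanSpace ℝ (Fin n)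

/-!
The delta integral of a function that is bounded on `T^k` and continuous at right-dense points is
its integral against `deltaMeasure T a b`, the push-forward of Lebesgue measure on `[a, b)` under
`u ↦ max {t ∈ T | t ≤ u}`; this measure has an atom of mass `μ(t)` at each right-scattered `t`.

Write `p(t)` and `q(t)` for `L_y` and `L_v` along the minimizer. Since `y(b)` is free, the primitive
`η(t) = (∫_{[a, t)} φ) w` of any test function `φ` times any vector `w` is an admissible variation,
with `η(σ(t)) = (∫_{[a, t]} φ) w`. Vanishing of the first variation and Fubini give
`∫ φ(t) (q(t) + ∫_{[t, b)} p) = 0`, so `q(t) + ∫_{[t, b)} p = 0` almost everywhere, and by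
right-dense continuity at every `t ∈ T^k`. At `t = ρ(b)` the remaining integral is the single atom
`μ(ρ(b)) p(ρ(b))`.
-/

open MeasureTheory Asymptotics
open scoped Topology InnerProductSpace

/-! ### Jump operators and `T^k` -/

section JumpOperators

variable {S : Set ℝ} {s t u x : ℝ}

lemma le_tsSigma (S : Set ℝ) (t : ℝ) : t ≤ tsSigma S t := by
  unfold tsSigma
  split_ifs with h
  · exact le_csInf h fun s hs ↦ hs.2.le
  · exact le_rfl

lemma tsSigma_le (hs : s ∈ S) (hts : t < s) : tsSigma S t ≤ s := by
  rw [tsSigma, if_pos ⟨s, hs, hts⟩]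
  exact csInf_le ⟨t, fun x hx ↦ hx.2.le⟩ ⟨hs, hts⟩

lemma tsRho_le (S : Set ℝ) (t : ℝ) : tsRho S t ≤ t := by
  unfold tsRho
  split_ifs with h
  · exact csSup_le h fun s hs ↦ hs.2.le
  · exact le_rfl

lemma le_tsRho (hs : s ∈ S) (hst : s < t) : s ≤ tsRho S t := by
  rw [tsRho, if_pos ⟨s, hs, hst⟩]
  exact le_csSup ⟨t, fun x hx ↦ hx.2.le⟩ ⟨hs, hst⟩

lemma tsSigma_mem (hS : IsClosed S) (ht : t ∈ S) : tsSigma S t ∈ S := by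
  unfold tsSigma
  split_ifs with h
  · exact closure_minimal (fun x hx ↦ hx.1) hS (csInf_mem_closure h ⟨t, fun x hx ↦ hx.2.le⟩)
  · exact ht

lemma tsRho_mem (hS : IsClosed S) (ht : t ∈ S) : tsRho S t ∈ S := by
  unfold tsRho
  split_ifs with h
  · exact closure_minimal (fun x hx ↦ hx.1) hS (csSup_mem_closure h ⟨t, fun x hx ↦ hx.2.le⟩)
  · exact ht

lemma exists_mem_Ioo_of_tsSigma_lt (hu : u ∈ S) (htu : t < u) (hx : tsSigma S t < x) :
    ∃ s ∈ S, s ∈ Ioo t x := by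
  have hne : {s | s ∈ S ∧ t < s}.Nonempty := ⟨u, hu, htu⟩
  rw [tsSigma, if_pos hne] at hx
  obtain ⟨s, ⟨hs, hts⟩, hsx⟩ := exists_lt_of_csInf_lt hne hx
  exact ⟨s, hs, hts, hsx⟩

lemma exists_mem_Ioo_of_lt_tsRho (hu : u ∈ S) (hut : u < t) (hx : x < tsRho S t) :
    ∃ s ∈ S, s ∈ Ioo x t := by
  have hne : {s | s ∈ S ∧ s < t}.Nonempty := ⟨u, hu, hut⟩
  rw [tsRho, if_pos hne] at hx
  obtain ⟨s, ⟨hs, hst⟩, hxs⟩ := exists_lt_of_lt_csSup hne hx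
  exact ⟨s, hs, hxs, hst⟩

lemma nhdsWithin_inter_Ioi_eq_bot (h : tsSigma S t ≠ t) : 𝓝[S ∩ Ioi t] t = ⊥ := by
  rw [← empty_mem_iff_bot]
  filter_upwards [nhdsWithin_le_nhds (Iio_mem_nhds ((le_tsSigma S t).lt_of_ne h.symm)),
    self_mem_nhdsWithin] with x hx hx'
  exact (tsSigma_le hx'.1 hx'.2).not_gt hx

lemma nhdsWithin_inter_Iio_eq_bot (h : tsRho S t ≠ t) : 𝓝[S ∩ Iio t] t = ⊥ := by
  rw [← empty_mem_iff_bot]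
  filter_upwards [nhdsWithin_le_nhds (Ioi_mem_nhds ((tsRho_le S t).lt_of_ne h)),
    self_mem_nhdsWithin] with x hx hx'
  exact (le_tsRho hx'.1 hx'.2).not_gt hx

lemma nhdsWithin_eq_sup_of_mem (ht : t ∈ S) :
    𝓝[S] t = 𝓝[S ∩ Iio t] t ⊔ (pure t ⊔ 𝓝[S ∩ Ioi t] t) := by
  rw [← nhdsWithin_singleton, ← nhdsWithin_union, ← nhdsWithin_union]
  congr 1
  rw [union_left_comm, ← inter_union_distrib_left, Iio_union_Ioi, singleton_union,
    ← sdiff_eq, insert_sdiff_self_of_mem ht]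

lemma countable_setOf_tsSigma_ne (S : Set ℝ) : {t ∈ S | tsSigma S t ≠ t}.Countable :=
  countable_setOfPred_isolated_right_within.mono fun _ ht ↦
    And.intro ht.1 (nhdsWithin_inter_Ioi_eq_bot ht.2)

lemma RdContinuousOn.of_continuousOn {E : Type*} [NormedAddCommGroup E] {f : ℝ → E}
    (hf : ContinuousOn f S) : RdContinuousOn S f := fun t ht ↦
  ⟨fun _ ↦ hf t ht, fun _ ↦ ⟨f t, (hf t ht).mono_left (nhdsWithin_mono t inter_subset_left)⟩⟩

lemma RdContinuousOn.isBounded_image {E : Type*} [NormedAddCommGroup E] {f : ℝ → E}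
    (hf : RdContinuousOn S f) (hS : IsCompact S) : Bornology.IsBounded (f '' S) := by
  refine hS.induction_on (p := fun s ↦ Bornology.IsBounded (f '' s)) (by simp)
    (fun _ _ hst ht ↦ ht.subset (image_mono hst))
    (fun s t hs ht ↦ image_union f s t ▸ hs.union ht) fun t ht ↦ ?_
  have left : ∃ s ∈ 𝓝[S ∩ Iio t] t, Bornology.IsBounded (f '' s) := by
    by_cases h : tsRho S t = t
    · obtain ⟨l, hl⟩ := (hf t ht).2 h
      exact Metric.exists_isBounded_image_of_tendsto hl
    · exact ⟨∅, by simp [nhdsWithin_inter_Iio_eq_bot h]⟩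
  have right : ∃ s ∈ 𝓝[S ∩ Ioi t] t, Bornology.IsBounded (f '' s) := by
    by_cases h : tsSigma S t = t
    · exact Metric.exists_isBounded_image_of_tendsto
        (((hf t ht).1 h).mono_left (nhdsWithin_mono t inter_subset_left))
    · exact ⟨∅, by simp [nhdsWithin_inter_Ioi_eq_bot h]⟩
  obtain ⟨l, hl, hfl⟩ := left
  obtain ⟨r, hr, hfr⟩ := right
  refine ⟨l ∪ ({t} ∪ r), ?_, ?_⟩
  · rw [nhdsWithin_eq_sup_of_mem ht]
    exact union_mem_sup hl (union_mem_sup (mem_singleton t) hr)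
  · simpa only [image_union, image_singleton] using
      hfl.union (Bornology.isBounded_singleton.union hfr)

end JumpOperators

/-- A compact time scale with distinct endpoints `a = min T` and `b = max T`. -/
structure IsCompactTimeScale (T : Set ℝ) (a b : ℝ) : Prop where
  isCompact : IsCompact T
  isLeast : IsLeast T a
  isGreatest : IsGreatest T b
  lt : a < b

namespace IsCompactTimeScale

variable {T : Set ℝ} {a b s t : ℝ}

lemma tsSigma_mem (h : IsCompactTimeScale T a b) (ht : t ∈ T) : tsSigma T t ∈ T :=
  _root_.tsSigma_mem h.isCompact.isClosed ht

lemma tsRho_mem (h : IsCompactTimeScale T a b) : tsRho T b ∈ T :=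
  _root_.tsRho_mem h.isCompact.isClosed h.isGreatest.1

lemma mem_tsTk_iff (h : IsCompactTimeScale T a b) : t ∈ tsTk T ↔ t ∈ T ∧ t ≤ tsRho T b := by
  rw [tsTk, h.isGreatest.csSup_eq]
  exact and_congr_right fun ht ↦ by simp [h.isGreatest.2 ht]

lemma tsTk_subset (h : IsCompactTimeScale T a b) : tsTk T ⊆ T := fun _ ht ↦ (h.mem_tsTk_iff.1 ht).1

lemma mem_tsTk_of_lt (h : IsCompactTimeScale T a b) (ht : t ∈ T) (htb : t < b) : t ∈ tsTk T :=
  h.mem_tsTk_iff.2 ⟨ht, le_tsRho ht htb⟩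

lemma tsRho_mem_tsTk (h : IsCompactTimeScale T a b) : tsRho T b ∈ tsTk T :=
  h.mem_tsTk_iff.2 ⟨h.tsRho_mem, le_rfl⟩

lemma isCompact_tsTk (h : IsCompactTimeScale T a b) : IsCompact (tsTk T) := by
  have : tsTk T = T ∩ Iic (tsRho T b) := ext fun _ ↦ h.mem_tsTk_iff
  exact this ▸ h.isCompact.inter_right isClosed_Iic

lemma tsSigma_right (h : IsCompactTimeScale T a b) : tsSigma T b = b :=
  le_antisymm (h.isGreatest.2 (h.tsSigma_mem h.isGreatest.1)) (le_tsSigma T b)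

lemma tsSigma_tsRho (h : IsCompactTimeScale T a b) : tsSigma T (tsRho T b) = b := by
  rcases (tsRho_le T b).eq_or_lt with hr | hr
  · rw [hr, h.tsSigma_right]
  · refine le_antisymm (tsSigma_le h.isGreatest.1 hr) (le_of_not_gt fun hlt ↦ ?_)
    obtain ⟨s, hs, hrs, hsb⟩ := exists_mem_Ioo_of_tsSigma_lt h.isGreatest.1 hr hlt
    exact (le_tsRho hs hsb).not_gt hrs

lemma tsSigma_tsTk_eq_self (h : IsCompactTimeScale T a b) (hσ : tsSigma T t = t) :
    tsSigma (tsTk T) t = t := by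
  by_contra hne
  have hlt : t < tsSigma (tsTk T) t := (le_tsSigma _ t).lt_of_ne' hne
  by_cases hright : ∃ u ∈ tsTk T, t < u
  · obtain ⟨u, hu, htu⟩ := hright
    obtain ⟨s, hs, hts, hsu⟩ := exists_mem_Ioo_of_tsSigma_lt (h.tsTk_subset hu) htu
      (hσ.trans_lt (lt_min hlt htu))
    rw [lt_min_iff] at hsu
    have hsk : s ∈ tsTk T := h.mem_tsTk_iff.2 ⟨hs, hsu.2.le.trans (h.mem_tsTk_iff.1 hu).2⟩
    exact (tsSigma_le hsk hts).not_gt hsu.1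
  · exact hne (if_neg fun ⟨u, hu⟩ ↦ hright ⟨u, hu⟩)

end IsCompactTimeScale

/-! ### Delta calculus -/

section DeltaCalculus

variable {E : Type*} [NormedAddCommGroup E] [NormedSpace ℝ E] {S : Set ℝ} {t : ℝ}
  {f g f' g' : ℝ → E} {d e : E}

lemma continuousWithinAt_tsSigma (ht : t ∈ S) (hσ : tsSigma S t = t) :
    ContinuousWithinAt (tsSigma S) S t := by
  rw [ContinuousWithinAt, hσ, tendsto_order]
  constructor
  · intro u hu
    filter_upwards [nhdsWithin_le_nhds (Ioi_mem_nhds hu)] with x hx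
    exact lt_of_lt_of_le hx (le_tsSigma S x)
  · intro u hu
    by_cases hright : ∃ s ∈ S, t < s
    · obtain ⟨s, hs, hts⟩ := hright
      obtain ⟨r, hr, htr, hru⟩ := exists_mem_Ioo_of_tsSigma_lt hs hts (hσ.trans_lt hu)
      filter_upwards [nhdsWithin_le_nhds (Iio_mem_nhds htr)] with x hx
      exact (tsSigma_le hr hx).trans_lt hru
    · push Not at hright
      filter_upwards [self_mem_nhdsWithin] with x hx
      rcases (hright x hx).eq_or_lt with rfl | hxt
      · rwa [hσ]
      · exact (tsSigma_le ht hxt).trans_lt hu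

lemma deltaDiffAt_iff_isLittleO :
    deltaDiffAt S f t d ↔
      (fun s ↦ f (tsSigma S t) - f s - (tsSigma S t - s) • d) =o[𝓝[S] t]
        fun s ↦ tsSigma S t - s := by
  simp only [isLittleO_iff, Filter.Eventually, Metric.mem_nhdsWithin_iff, Real.ball_eq_Ioo,
    inter_comm _ S, deltaDiffAt, Real.norm_eq_abs, subset_def, mem_ofPred_eq, gt_iff_lt]

lemma deltaDiffAt.continuousWithinAt (ht : t ∈ S) (hf : deltaDiffAt S f t d) :
    ContinuousWithinAt f S t := by
  rw [deltaDiffAt_iff_isLittleO] at hf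
  set r : ℝ → E := fun s ↦ f (tsSigma S t) - f s - (tsSigma S t - s) • d
  have hσ : Tendsto (fun s ↦ tsSigma S t - s) (𝓝[S] t) (𝓝 (tsSigma S t - t)) :=
    (tendsto_const_nhds.sub tendsto_id).mono_left nhdsWithin_le_nhds
  have hr : Tendsto r (𝓝[S] t) (𝓝 0) :=
    (isLittleO_one_iff ℝ).1 (hf.trans_isBigO (hσ.isBigO_one ℝ))
  have hrt : r t = 0 := tendsto_nhds_unique (tendsto_pure_nhds r t)
    (hr.mono_left (pure_le_nhdsWithin ht))
  have hlim := (tendsto_const_nhds (x := f (tsSigma S t))).sub (hr.add (hσ.smul_const d))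
  refine (hlim.congr fun s ↦ ?_).trans_eq ?_
  · simp [r]
  · rw [← hrt]; simp [r]

lemma deltaDiffAt.add (hf : deltaDiffAt S f t d) (hg : deltaDiffAt S g t e) :
    deltaDiffAt S (f + g) t (d + e) := by
  rw [deltaDiffAt_iff_isLittleO] at *
  refine (hf.add hg).congr_left fun s ↦ ?_
  simp only [Pi.add_apply, smul_add]
  abel

lemma deltaDiffAt.const_smul (c : ℝ) (hf : deltaDiffAt S f t d) :
    deltaDiffAt S (c • f) t (c • d) := by
  rw [deltaDiffAt_iff_isLittleO] at *
  refine (hf.const_smul_left c).congr_left fun s ↦ ?_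
  simp only [Pi.smul_apply, smul_sub, smul_comm c]

lemma RdContinuousOn.add {E : Type*} [NormedAddCommGroup E] {f g : ℝ → E}
    (hf : RdContinuousOn S f) (hg : RdContinuousOn S g) : RdContinuousOn S (f + g) :=
  fun t ht ↦ ⟨fun hσ ↦ ((hf t ht).1 hσ).add ((hg t ht).1 hσ), fun hρ ↦
    let ⟨_, hl⟩ := (hf t ht).2 hρ
    let ⟨_, hm⟩ := (hg t ht).2 hρ
    ⟨_, hl.add hm⟩⟩

lemma RdContinuousOn.const_smul (c : ℝ) (hf : RdContinuousOn S f) : RdContinuousOn S (c • f) :=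
  fun t ht ↦ ⟨fun hσ ↦ ((hf t ht).1 hσ).const_smul c, fun hρ ↦
    let ⟨_, hl⟩ := (hf t ht).2 hρ
    ⟨_, hl.const_smul c⟩⟩

lemma C1rd.add (hf : C1rd S f f') (hg : C1rd S g g') : C1rd S (f + g) (f' + g') :=
  ⟨fun t ht ↦ (hf.1 t ht).add (hg.1 t ht), hf.2.add hg.2⟩

lemma C1rd.const_smul (c : ℝ) (hf : C1rd S f f') : C1rd S (c • f) (c • f') :=
  ⟨fun t ht ↦ (hf.1 t ht).const_smul c, hf.2.const_smul c⟩

lemma C1rd.continuousOn {a b : ℝ} (h : IsCompactTimeScale S a b) (hf : C1rd S f f') :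
    ContinuousOn f S := by
  intro t ht
  by_cases htk : t ∈ tsTk S
  · exact (hf.1 t htk).continuousWithinAt ht
  · have htb : t = b := (h.isGreatest.2 ht).eq_of_not_lt fun htb ↦ htk (h.mem_tsTk_of_lt ht htb)
    have hρ : tsRho S t ≠ t := fun hρ ↦ htk (by
      subst htb
      exact hρ ▸ h.tsRho_mem_tsTk)
    have hright : S ∩ Ioi t = ∅ := by
      ext x
      simpa [htb] using fun hx ↦ h.isGreatest.2 hx
    rw [ContinuousWithinAt, nhdsWithin_eq_sup_of_mem ht, nhdsWithin_inter_Iio_eq_bot hρ, hright]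
    simpa using tendsto_pure_nhds f t

lemma tsSupNorm_le {E : Type*} [NormedAddCommGroup E] {f : ℝ → E} {C : ℝ}
    (hC : 0 ≤ C) (hf : ∀ t ∈ S, ‖f t‖ ≤ C) :
    tsSupNorm S f ≤ C :=
  Real.sSup_le (forall_mem_image.2 hf) hC

end DeltaCalculus

/-- Continuity at the right-dense points together with boundedness. This is what remains of
rd-continuity on `T^k` for the integrands of `∫ L(t, y(σ(t)), y^Δ(t)) Δt`, and it is enough to
integrate them. -/
structure IsRightDenseContinuous {F : Type*} [NormedAddCommGroup F] (T : Set ℝ) (f : ℝ → F) :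
    Prop where
  isBounded : Bornology.IsBounded (f '' tsTk T)
  continuousWithinAt : ∀ t ∈ tsTk T, tsSigma T t = t → ContinuousWithinAt f (tsTk T) t

section IsRightDenseContinuous

variable {T : Set ℝ} {a b : ℝ} {E F : Type*} [NormedAddCommGroup E] [NormedAddCommGroup F]

lemma IsRightDenseContinuous.exists_norm_le {f : ℝ → F} (hf : IsRightDenseContinuous T f) :
    ∃ C, ∀ t ∈ tsTk T, ‖f t‖ ≤ C :=
  let ⟨C, hC⟩ := hf.isBounded.exists_norm_le
  ⟨C, fun _ ht ↦ hC _ (mem_image_of_mem f ht)⟩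

lemma IsRightDenseContinuous.of_continuousOn (h : IsCompactTimeScale T a b) {f : ℝ → F}
    (hf : ContinuousOn f (tsTk T)) : IsRightDenseContinuous T f :=
  ⟨(h.isCompact_tsTk.image_of_continuousOn hf).isBounded, fun _ ht _ ↦ hf _ ht⟩

lemma IsRightDenseContinuous.prodMk {f : ℝ → E} {g : ℝ → F} (hf : IsRightDenseContinuous T f)
    (hg : IsRightDenseContinuous T g) : IsRightDenseContinuous T fun t ↦ (f t, g t) where
  isBounded := (hf.isBounded.prod hg.isBounded).subset <| by
    rintro _ ⟨t, ht, rfl⟩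
    exact ⟨mem_image_of_mem f ht, mem_image_of_mem g ht⟩
  continuousWithinAt t ht hσ :=
    (hf.continuousWithinAt t ht hσ).prodMk (hg.continuousWithinAt t ht hσ)

lemma RdContinuousOn.isRightDenseContinuous (h : IsCompactTimeScale T a b) {f : ℝ → F}
    (hf : RdContinuousOn (tsTk T) f) : IsRightDenseContinuous T f where
  isBounded := hf.isBounded_image h.isCompact_tsTk
  continuousWithinAt t ht hσ := (hf t ht).1 (h.tsSigma_tsTk_eq_self hσ)

lemma IsRightDenseContinuous.comp_tsSigma (h : IsCompactTimeScale T a b) {f : ℝ → F}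
    (hf : ContinuousOn f T) : IsRightDenseContinuous T fun t ↦ f (tsSigma T t) where
  isBounded := (h.isCompact.image_of_continuousOn hf).isBounded.subset <| by
    rintro _ ⟨t, ht, rfl⟩
    exact mem_image_of_mem f (h.tsSigma_mem (h.tsTk_subset ht))
  continuousWithinAt t ht hσ := by
    have htT := h.tsTk_subset ht
    have hft := hf t htT
    rw [← hσ] at hft
    exact (hft.comp (continuousWithinAt_tsSigma htT hσ) fun x hx ↦ h.tsSigma_mem hx).mono
      h.tsTk_subset

lemma IsRightDenseContinuous.comp_continuousOn [ProperSpace E] (h : IsCompactTimeScale T a b)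
    {f : ℝ → E} (hf : IsRightDenseContinuous T f) {Φ : ℝ × E → F}
    (hΦ : ContinuousOn Φ (T ×ˢ univ)) : IsRightDenseContinuous T fun t ↦ Φ (t, f t) where
  isBounded := by
    have hK : IsCompact (T ×ˢ closure (f '' tsTk T)) :=
      h.isCompact.prod hf.isBounded.isCompact_closure
    have hΦK := hΦ.mono (prod_mono_right (subset_univ (closure (f '' tsTk T))))
    refine (hK.image_of_continuousOn hΦK).isBounded.subset ?_
    rintro _ ⟨t, ht, rfl⟩
    exact ⟨(t, f t), ⟨h.tsTk_subset ht, subset_closure (mem_image_of_mem f ht)⟩, rfl⟩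
  continuousWithinAt t ht hσ :=
    (hΦ (t, f t) ⟨h.tsTk_subset ht, trivial⟩).comp (f := fun s ↦ (s, f s))
      (continuousWithinAt_id.prodMk (hf.continuousWithinAt t ht hσ))
      fun _ hx ↦ ⟨h.tsTk_subset hx, trivial⟩

lemma IsRightDenseContinuous.add [ProperSpace F] (h : IsCompactTimeScale T a b) {f g : ℝ → F}
    (hf : IsRightDenseContinuous T f) (hg : IsRightDenseContinuous T g) :
    IsRightDenseContinuous T fun t ↦ f t + g t :=
  (hf.prodMk hg).comp_continuousOn h (Φ := fun x ↦ x.2.1 + x.2.2) (by fun_prop)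

lemma IsRightDenseContinuous.smul [NormedSpace ℝ F] [ProperSpace F] (h : IsCompactTimeScale T a b)
    {c : ℝ → ℝ} {f : ℝ → F} (hc : IsRightDenseContinuous T c) (hf : IsRightDenseContinuous T f) :
    IsRightDenseContinuous T fun t ↦ c t • f t :=
  (hc.prodMk hf).comp_continuousOn h (Φ := fun x ↦ x.2.1 • x.2.2) (by fun_prop)

lemma C1rd.isRightDenseContinuous_prodMk [NormedSpace ℝ F] {η ηd : ℝ → F}
    (h : IsCompactTimeScale T a b) (hη : C1rd T η ηd) :
    IsRightDenseContinuous T fun t ↦ (η (tsSigma T t), ηd t) :=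
  (IsRightDenseContinuous.comp_tsSigma h (hη.continuousOn h)).prodMk
    (hη.2.isRightDenseContinuous h)

end IsRightDenseContinuous

/-! ### The delta measure -/

/-- The largest point of `T` not exceeding `u` (for `u ≥ min T`). -/
def tsFloor (T : Set ℝ) (u : ℝ) : ℝ := sSup (T ∩ Iic u)

/-- The measure on `ℝ` whose integral over `[s, t)`, for `s, t ∈ T`, is the delta integral from
`s` to `t`: Lebesgue measure on `[a, b)` pushed forward by `tsFloor T`, which sends each gap
`[t, σ(t))` of the time scale to an atom of mass `μ(t)` at `t`. -/
def deltaMeasure (T : Set ℝ) (a b : ℝ) : Measure ℝ :=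
  (volume.restrict (Ico a b)).map (tsFloor T)

instance (T : Set ℝ) (a b : ℝ) : IsFiniteMeasure (deltaMeasure T a b) :=
  inferInstanceAs (IsFiniteMeasure (Measure.map _ _))

namespace IsCompactTimeScale

variable {T : Set ℝ} {a b s t u : ℝ}

lemma tsFloor_mem (h : IsCompactTimeScale T a b) (hu : a ≤ u) : tsFloor T u ∈ T ∩ Iic u :=
  (h.isCompact.inter_right isClosed_Iic).sSup_mem ⟨a, h.isLeast.1, hu⟩

lemma le_tsFloor_iff (h : IsCompactTimeScale T a b) (ht : t ∈ T) (hu : a ≤ u) :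
    t ≤ tsFloor T u ↔ t ≤ u :=
  ⟨fun htu ↦ htu.trans (h.tsFloor_mem hu).2, fun htu ↦ le_csSup ⟨u, fun _ hx ↦ hx.2⟩ ⟨ht, htu⟩⟩

lemma aemeasurable_tsFloor (h : IsCompactTimeScale T a b) :
    AEMeasurable (tsFloor T) (volume.restrict (Ico a b)) :=
  aemeasurable_restrict_of_monotoneOn measurableSet_Ico fun _ hu _ hv huv ↦
    (h.le_tsFloor_iff (h.tsFloor_mem hu.1).1 hv.1).2 ((h.tsFloor_mem hu.1).2.trans huv)

lemma deltaMeasure_apply (h : IsCompactTimeScale T a b) {A : Set ℝ} (hA : MeasurableSet A) :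
    deltaMeasure T a b A = volume (tsFloor T ⁻¹' A ∩ Ico a b) := by
  rw [deltaMeasure, Measure.map_apply_of_aemeasurable h.aemeasurable_tsFloor hA,
    Measure.restrict_apply' measurableSet_Ico]

lemma deltaMeasure_Ico (h : IsCompactTimeScale T a b) (hs : s ∈ T) (ht : t ∈ T) :
    deltaMeasure T a b (Ico s t) = ENNReal.ofReal (t - s) := by
  rw [h.deltaMeasure_apply measurableSet_Ico, ← Real.volume_Ico]
  congr 1
  ext u
  constructor
  · rintro ⟨⟨hsu, hut⟩, hau, -⟩
    exact ⟨(h.le_tsFloor_iff hs hau).1 hsu, not_le.1 fun htu ↦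
      hut.not_ge ((h.le_tsFloor_iff ht hau).2 htu)⟩
  · rintro ⟨hsu, hut⟩
    have hau := (h.isLeast.2 hs).trans hsu
    exact ⟨⟨(h.le_tsFloor_iff hs hau).2 hsu, not_le.1 fun htu ↦
      hut.not_ge ((h.le_tsFloor_iff ht hau).1 htu)⟩, hau, hut.trans_le (h.isGreatest.2 ht)⟩

lemma ae_mem_tsTk (h : IsCompactTimeScale T a b) : ∀ᵐ t ∂deltaMeasure T a b, t ∈ tsTk T := by
  refine (ae_map_iff h.aemeasurable_tsFloor h.isCompact_tsTk.measurableSet).2 ?_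
  filter_upwards [ae_restrict_mem measurableSet_Ico] with u hu
  have hmem := h.tsFloor_mem hu.1
  exact h.mem_tsTk_of_lt hmem.1 (lt_of_le_of_lt hmem.2 hu.2)

lemma deltaMeasure_singleton_of_tsSigma_eq (h : IsCompactTimeScale T a b)
    (hσ : tsSigma T t = t) : deltaMeasure T a b {t} = 0 := by
  have hsub : tsFloor T ⁻¹' {t} ∩ Ico a b ⊆ {t} := by
    rintro u ⟨rfl : tsFloor T u = t, hau, hub⟩
    refine mem_singleton_iff.2 (le_antisymm (not_lt.1 fun hlt ↦ ?_) (h.tsFloor_mem hau).2)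
    obtain ⟨s, hs, hts, hsu⟩ := exists_mem_Ioo_of_tsSigma_lt h.isGreatest.1 (hlt.trans hub)
      (hσ.trans_lt hlt)
    exact ((h.le_tsFloor_iff hs hau).2 hsu.le).not_gt hts
  rw [h.deltaMeasure_apply (measurableSet_singleton t)]
  exact measure_mono_null hsub Real.volume_singleton

lemma Iio_tsSigma_ae_eq_Iic (h : IsCompactTimeScale T a b) (t : ℝ) :
    Iio (tsSigma T t) =ᵐ[deltaMeasure T a b] Iic t := by
  by_cases hσ : tsSigma T t = t
  · rw [hσ]
    exact Iio_ae_eq_Iic' (h.deltaMeasure_singleton_of_tsSigma_eq hσ)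
  · filter_upwards [h.ae_mem_tsTk] with x hx
    have hlt : t < tsSigma T t := (le_tsSigma T t).lt_of_ne' hσ
    exact propext ⟨fun hxσ ↦ not_lt.1 fun htx ↦ (tsSigma_le (h.tsTk_subset hx) htx).not_gt hxσ,
      fun hxt ↦ lt_of_le_of_lt hxt hlt⟩

lemma Ico_tsSigma_ae_eq_singleton (h : IsCompactTimeScale T a b) (t : ℝ) :
    Ico t (tsSigma T t) =ᵐ[deltaMeasure T a b] ({t} : Set ℝ) := by
  rw [← Ici_inter_Iio, ← Icc_self, ← Ici_inter_Iic]
  exact (ae_eq_refl _).inter (h.Iio_tsSigma_ae_eq_Iic t)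

lemma Ici_tsRho_ae_eq_singleton (h : IsCompactTimeScale T a b) :
    Ici (tsRho T b) =ᵐ[deltaMeasure T a b] ({tsRho T b} : Set ℝ) := by
  filter_upwards [h.ae_mem_tsTk] with x hx
  exact propext ⟨fun hρx ↦ le_antisymm (h.mem_tsTk_iff.1 hx).2 hρx, fun hxρ ↦ hxρ.ge⟩

lemma deltaMeasure_singleton (h : IsCompactTimeScale T a b) (ht : t ∈ T) :
    deltaMeasure T a b {t} = ENNReal.ofReal (tsMu T t) := by
  rw [← measure_congr (h.Ico_tsSigma_ae_eq_singleton t), h.deltaMeasure_Ico ht (h.tsSigma_mem ht),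
    tsMu]

end IsCompactTimeScale

section Integration

variable {T : Set ℝ} {a b s t : ℝ} {E : Type*} [NormedAddCommGroup E] {f : ℝ → E}

lemma aestronglyMeasurable_restrict_of_countable {μ : Measure ℝ} {C : Set ℝ} (hC : C.Countable) :
    AEStronglyMeasurable f (μ.restrict C) := by
  have := hC.to_subtype
  rw [← iUnion_of_singleton_coe C, aestronglyMeasurable_iUnion_iff]
  intro x
  rw [Measure.restrict_singleton]
  exact aestronglyMeasurable_dirac.smul_measure _

lemma IsRightDenseContinuous.aestronglyMeasurable (h : IsCompactTimeScale T a b)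
    (hf : IsRightDenseContinuous T f) : AEStronglyMeasurable f (deltaMeasure T a b) := by
  set C : Set ℝ := {t ∈ T | tsSigma T t ≠ t}
  have hC : C.Countable := countable_setOf_tsSigma_ne T
  have hcont : ContinuousOn f (tsTk T \ C) := fun t ht ↦
    (hf.continuousWithinAt t ht.1 (not_not.1 fun hσ ↦ ht.2 ⟨h.tsTk_subset ht.1, hσ⟩)).mono
      sdiff_subset
  rw [← Measure.restrict_eq_self_of_ae_mem h.ae_mem_tsTk]
  refine AEStronglyMeasurable.mono_set (subset_sdiff_union (tsTk T) C) ?_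
  exact aestronglyMeasurable_union_iff.2
    ⟨hcont.aestronglyMeasurable (h.isCompact_tsTk.measurableSet.diff hC.measurableSet),
      aestronglyMeasurable_restrict_of_countable hC⟩

lemma IsRightDenseContinuous.integrable (h : IsCompactTimeScale T a b)
    (hf : IsRightDenseContinuous T f) : Integrable f (deltaMeasure T a b) := by
  obtain ⟨C, hC⟩ := hf.exists_norm_le
  exact .of_bound (hf.aestronglyMeasurable h) C (h.ae_mem_tsTk.mono hC)

variable [NormedSpace ℝ E]

/-- The delta antiderivative of `f` on `T` vanishing at `min T`. -/
def deltaPrimitive (T : Set ℝ) (a b : ℝ) (f : ℝ → E) (t : ℝ) : E :=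
  ∫ x in Iio t, f x ∂deltaMeasure T a b

lemma deltaPrimitive_left (h : IsCompactTimeScale T a b) (f : ℝ → E) :
    deltaPrimitive T a b f a = 0 := by
  have hnull : deltaMeasure T a b (Iio a) = 0 := by
    refine measure_mono_null (t := (tsTk T)ᶜ) (fun x hx hxk ↦ ?_) h.ae_mem_tsTk
    exact (h.isLeast.2 (h.tsTk_subset hxk)).not_gt hx
  exact setIntegral_measure_zero f hnull

lemma deltaPrimitive_right (h : IsCompactTimeScale T a b) (f : ℝ → E) :
    deltaPrimitive T a b f b = ∫ x, f x ∂deltaMeasure T a b := by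
  have := setIntegral_congr_set (f := f) (h.Iio_tsSigma_ae_eq_Iic b)
  rw [h.tsSigma_right] at this
  rw [deltaPrimitive, this, Measure.restrict_eq_self_of_ae_mem]
  filter_upwards [h.ae_mem_tsTk] with x hx using h.isGreatest.2 (h.tsTk_subset hx)

lemma deltaPrimitive_tsSigma (h : IsCompactTimeScale T a b) (f : ℝ → E) (t : ℝ) :
    deltaPrimitive T a b f (tsSigma T t) = ∫ x in Iic t, f x ∂deltaMeasure T a b :=
  setIntegral_congr_set (h.Iio_tsSigma_ae_eq_Iic t)

lemma deltaPrimitive_sub (hf : Integrable f (deltaMeasure T a b)) (hst : s ≤ t) :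
    deltaPrimitive T a b f t - deltaPrimitive T a b f s =
      ∫ x in Ico s t, f x ∂deltaMeasure T a b := by
  rw [← Iio_sdiff_Iio, setIntegral_sdiff measurableSet_Iio hf.integrableOn (Iio_subset_Iio hst)]
  rfl

lemma integral_singleton_deltaMeasure [CompleteSpace E] (h : IsCompactTimeScale T a b) (ht : t ∈ T)
    (f : ℝ → E) : ∫ x in {t}, f x ∂deltaMeasure T a b = tsMu T t • f t := by
  have hμ : 0 ≤ tsMu T t := sub_nonneg.2 (le_tsSigma T t)
  rw [integral_singleton, Measure.real, h.deltaMeasure_singleton ht, ENNReal.toReal_ofReal hμ]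

lemma deltaPrimitive_tsSigma_sub [CompleteSpace E] (h : IsCompactTimeScale T a b)
    (hf : Integrable f (deltaMeasure T a b)) (ht : t ∈ T) :
    deltaPrimitive T a b f (tsSigma T t) - deltaPrimitive T a b f t = tsMu T t • f t := by
  rw [deltaPrimitive_sub hf (le_tsSigma T t), setIntegral_congr_set
    (h.Ico_tsSigma_ae_eq_singleton t), integral_singleton_deltaMeasure h ht]

lemma norm_deltaPrimitive_sub_le [CompleteSpace E] (h : IsCompactTimeScale T a b)
    (hf : Integrable f (deltaMeasure T a b)) (hs : s ∈ T) (ht : t ∈ T) {c : E} {C : ℝ}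
    (hC : ∀ x ∈ tsTk T ∩ uIcc s t, ‖f x - c‖ ≤ C) :
    ‖deltaPrimitive T a b f t - deltaPrimitive T a b f s - (t - s) • c‖ ≤ C * |t - s| := by
  wlog hst : s ≤ t generalizing s t
  · rw [uIcc_comm] at hC
    rw [← norm_neg, abs_sub_comm]
    refine le_of_eq_of_le (congrArg norm ?_) (this ht hs hC (le_of_not_ge hst))
    module
  have hν : (deltaMeasure T a b).real (Ico s t) = t - s := by
    rw [Measure.real, h.deltaMeasure_Ico hs ht, ENNReal.toReal_ofReal (sub_nonneg.2 hst)]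
  have hsub : deltaPrimitive T a b f t - deltaPrimitive T a b f s - (t - s) • c =
      ∫ x in Ico s t, (f x - c) ∂deltaMeasure T a b := by
    rw [deltaPrimitive_sub hf hst, integral_sub hf.integrableOn (integrable_const c),
      setIntegral_const, hν]
  rw [hsub, abs_of_nonneg (sub_nonneg.2 hst), ← hν]
  refine norm_setIntegral_le_of_norm_le_const_ae (measure_lt_top _ _) ?_
  filter_upwards [ae_restrict_mem measurableSet_Ico, ae_restrict_of_ae h.ae_mem_tsTk] with x hx hxk
  exact hC x ⟨hxk, uIcc_of_le hst ▸ Ico_subset_Icc_self hx⟩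

lemma norm_deltaPrimitive_tsSigma_sub_le [CompleteSpace E] (h : IsCompactTimeScale T a b)
    (hf : Integrable f (deltaMeasure T a b)) (hs : s ∈ T) (ht : t ∈ T) {C : ℝ}
    (hC : ∀ x ∈ tsTk T ∩ uIcc s t, ‖f x - f t‖ ≤ C) :
    ‖deltaPrimitive T a b f (tsSigma T t) - deltaPrimitive T a b f s - (tsSigma T t - s) • f t‖ ≤
      C * |t - s| := by
  refine le_of_eq_of_le (congrArg norm ?_) (norm_deltaPrimitive_sub_le h hf hs ht hC)
  rw [sub_eq_iff_eq_add.1 (deltaPrimitive_tsSigma_sub h hf ht), tsMu]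
  module

lemma isDeltaAntideriv_deltaPrimitive [CompleteSpace E] (h : IsCompactTimeScale T a b)
    (hf : IsRightDenseContinuous T f) : IsDeltaAntideriv T f (deltaPrimitive T a b f) := by
  intro t ht
  have hle {s : ℝ} (hs : s ∈ T) {C : ℝ} :=
    norm_deltaPrimitive_tsSigma_sub_le h (hf.integrable h) hs (h.tsTk_subset ht) (C := C)
  rw [deltaDiffAt_iff_isLittleO]
  by_cases hσ : tsSigma T t = t
  · rw [isLittleO_iff]
    intro ε hε
    obtain ⟨δ, hδ, hfδ⟩ := Metric.continuousWithinAt_iff.1 (hf.continuousWithinAt t ht hσ) ε hε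
    filter_upwards [self_mem_nhdsWithin, nhdsWithin_le_nhds (Metric.ball_mem_nhds t hδ)]
      with s hs hsδ
    have hbound := hle hs fun x hx ↦ by
      rw [← dist_eq_norm]
      exact (hfδ hx.1 ((Real.dist_right_le_of_mem_uIcc hx.2).trans_lt hsδ)).le
    simpa only [hσ, Real.norm_eq_abs] using hbound
  · obtain ⟨C, hC⟩ := hf.exists_norm_le
    have hO : (fun s ↦ deltaPrimitive T a b f (tsSigma T t) - deltaPrimitive T a b f s -
        (tsSigma T t - s) • f t) =O[𝓝[T] t] fun s ↦ t - s := by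
      refine .of_bound (C + C) ?_
      filter_upwards [self_mem_nhdsWithin] with s hs
      exact hle hs fun x hx ↦ (norm_sub_le _ _).trans (add_le_add (hC x hx.1) (hC t ht))
    have hlim (c : ℝ) : Tendsto (fun s ↦ c - s) (𝓝[T] t) (𝓝 (c - t)) :=
      (tendsto_const_nhds.sub tendsto_id).mono_left nhdsWithin_le_nhds
    have hμ : tsSigma T t - t ≠ 0 := sub_ne_zero.2 hσ
    have ho : (fun s ↦ t - s) =o[𝓝[T] t] fun _ ↦ tsSigma T t - t :=
      (isLittleO_const_iff hμ).2 (by simpa only [sub_self] using hlim t)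
    exact hO.trans_isLittleO <| ho.trans_isBigO <|
      ((isEquivalent_const_iff_tendsto hμ).2 (hlim (tsSigma T t))).symm.isBigO

lemma continuousOn_deltaPrimitive [CompleteSpace E] (h : IsCompactTimeScale T a b)
    (hf : IsRightDenseContinuous T f) : ContinuousOn (deltaPrimitive T a b f) (tsTk T) := by
  intro t ht
  exact ((isDeltaAntideriv_deltaPrimitive h hf t ht).continuousWithinAt (h.tsTk_subset ht)).mono
    h.tsTk_subset

lemma c1rd_deltaPrimitive [CompleteSpace E] (h : IsCompactTimeScale T a b)
    (hf : ContinuousOn f (tsTk T)) : C1rd T (deltaPrimitive T a b f) f :=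
  ⟨isDeltaAntideriv_deltaPrimitive h (.of_continuousOn h hf), .of_continuousOn hf⟩

lemma setIntegral_Ici_deltaMeasure (hf : Integrable f (deltaMeasure T a b)) (t : ℝ) :
    ∫ x in Ici t, f x ∂deltaMeasure T a b =
      (∫ x, f x ∂deltaMeasure T a b) - deltaPrimitive T a b f t := by
  rw [← compl_Iio, setIntegral_compl measurableSet_Iio hf, deltaPrimitive]

end Integration

/-! ### The du Bois-Reymond lemma -/

section DuBoisReymond

variable {E : Type*} [NormedAddCommGroup E] [NormedSpace ℝ E]

section Fubini

variable {α : Type*} [LinearOrder α] [TopologicalSpace α] [OrderClosedTopology α]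
  [MeasurableSpace α] [BorelSpace α] {μ : Measure α} {φ : α → ℝ} {p : α → E}

lemma integral_indicator_le_smul_right (φ : α → ℝ) (p : α → E) (s : α) :
    ∫ t, {z : α × α | z.1 ≤ z.2}.indicator (fun z ↦ φ z.1 • p z.2) (s, t) ∂μ =
      φ s • ∫ t in Ici s, p t ∂μ := by
  rw [← integral_smul, ← integral_indicator measurableSet_Ici]
  rfl

lemma integral_indicator_le_smul_left [CompleteSpace E] (φ : α → ℝ) (p : α → E) (t : α) :
    ∫ s, {z : α × α | z.1 ≤ z.2}.indicator (fun z ↦ φ z.1 • p z.2) (s, t) ∂μ =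
      (∫ s in Iic t, φ s ∂μ) • p t := by
  rw [← integral_smul_const, ← integral_indicator measurableSet_Iic]
  rfl

variable [SecondCountableTopology α]

lemma integrable_indicator_le_smul (hφ : Integrable φ μ) (hp : Integrable p μ) :
    Integrable ({z : α × α | z.1 ≤ z.2}.indicator fun z ↦ φ z.1 • p z.2) (μ.prod μ) :=
  (hφ.smul_prod hp).indicator measurableSet_le'

lemma integral_setIntegral_Iic_smul [SFinite μ] [CompleteSpace E] (hφ : Integrable φ μ)
    (hp : Integrable p μ) :
    ∫ t, (∫ s in Iic t, φ s ∂μ) • p t ∂μ = ∫ s, φ s • ∫ t in Ici s, p t ∂μ ∂μ := by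
  simp only [← integral_indicator_le_smul_left, ← integral_indicator_le_smul_right]
  exact (integral_integral_swap
    (f := fun s t ↦ {z : α × α | z.1 ≤ z.2}.indicator (fun z ↦ φ z.1 • p z.2) (s, t))
    (integrable_indicator_le_smul hφ hp)).symm

end Fubini

lemma ae_add_setIntegral_Ici_eq_zero [CompleteSpace E] {μ : Measure ℝ} [IsFiniteMeasure μ]
    {p q : ℝ → E} (hp : Integrable p μ) (hq : Integrable q μ)
    (H : ∀ φ : ℝ → ℝ, Continuous φ → HasCompactSupport φ →
      ∫ t, ((∫ s in Iic t, φ s ∂μ) • p t + φ t • q t) ∂μ = 0) :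
    ∀ᵐ t ∂μ, q t + ∫ s in Ici t, p s ∂μ = 0 := by
  have hP : Integrable (fun t ↦ ∫ s in Ici t, p s ∂μ) μ := by
    refine (integrable_indicator_le_smul (integrable_const (1 : ℝ)) hp).integral_prod_left.congr
      (.of_forall fun s ↦ ?_)
    exact (integral_indicator_le_smul_right (fun _ ↦ (1 : ℝ)) p s).trans (one_smul ℝ _)
  refine ae_eq_zero_of_integral_contDiff_smul_eq_zero (hq.add hP).locallyIntegrable
    fun φ hφ hφs ↦ ?_
  have hφi : Integrable φ μ := hφ.continuous.integrable_of_hasCompactSupport hφs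
  have hint {f : ℝ → E} (hf : Integrable f μ) : Integrable (fun t ↦ φ t • f t) μ :=
    hf.locallyIntegrable.integrable_smul_left_of_hasCompactSupport hφ.continuous hφs
  have hpi : Integrable (fun t ↦ (∫ s in Iic t, φ s ∂μ) • p t) μ := by
    have := (integrable_indicator_le_smul hφi hp).integral_prod_right
    simpa only [integral_indicator_le_smul_left φ p] using this
  rw [← H φ hφ.continuous hφs, integral_add hpi (hint hq), integral_setIntegral_Iic_smul hφi hp,
    ← integral_add (hint hP) (hint hq)]
  simp only [smul_add, add_comm]

end DuBoisReymond

section TimeScale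

variable {T : Set ℝ} {a b t : ℝ} {F : Type*} [NormedAddCommGroup F]

lemma IsCompactTimeScale.exists_Ico_subset_ball {δ : ℝ}
    (h : IsCompactTimeScale T a b) (ht : t ∈ tsTk T) (hσ : tsSigma T t = t) (hδ : 0 < δ) :
    ∃ r ∈ T, ∃ s ∈ T, r < s ∧ Ico r s ⊆ Metric.ball t δ := by
  simp only [Real.ball_eq_Ioo]
  rcases (h.isGreatest.2 (h.tsTk_subset ht)).lt_or_eq with htb | rfl
  · obtain ⟨s, hs, hts, hsδ⟩ := exists_mem_Ioo_of_tsSigma_lt h.isGreatest.1 htb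
      (hσ.trans_lt (lt_add_of_pos_right t hδ))
    exact ⟨t, h.tsTk_subset ht, s, hs, hts, fun x hx ↦
      ⟨(sub_lt_self t hδ).trans_le hx.1, hx.2.trans hsδ⟩⟩
  · obtain ⟨r, hr, hδr, hrt⟩ := exists_mem_Ioo_of_lt_tsRho h.isLeast.1 h.lt
      ((sub_lt_self t hδ).trans_le (h.mem_tsTk_iff.1 ht).2)
    exact ⟨r, hr, t, h.isGreatest.1, hrt, fun x hx ↦
      ⟨hδr.trans_le hx.1, hx.2.trans (lt_add_of_pos_right t hδ)⟩⟩

lemma IsRightDenseContinuous.eq_zero_of_ae {f : ℝ → F} (h : IsCompactTimeScale T a b)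
    (hf : IsRightDenseContinuous T f) (hf0 : ∀ᵐ x ∂deltaMeasure T a b, f x = 0)
    (ht : t ∈ tsTk T) : f t = 0 := by
  have hpos {A : Set ℝ} (hA : deltaMeasure T a b A ≠ 0) : ∃ x ∈ A, x ∈ tsTk T ∧ f x = 0 :=
    ((frequently_ae_mem_iff.2 hA).and_eventually (h.ae_mem_tsTk.and hf0)).exists
  by_cases hσ : tsSigma T t = t
  · refine tendsto_nhds_unique_of_frequently_eq (hf.continuousWithinAt t ht hσ)
      (tendsto_const_nhds (x := (0 : F))) (frequently_iff.2 fun hU ↦ ?_)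
    obtain ⟨δ, hδ, hδU⟩ := Metric.mem_nhdsWithin_iff.1 hU
    obtain ⟨r, hr, s, hs, hrs, hrsδ⟩ := h.exists_Ico_subset_ball ht hσ hδ
    obtain ⟨x, hx, hxk, hfx⟩ := hpos (A := Ico r s)
      (by simpa only [h.deltaMeasure_Ico hr hs, ne_eq, ENNReal.ofReal_eq_zero, not_le, sub_pos])
    exact ⟨x, hδU ⟨hrsδ hx, hxk⟩, hfx⟩
  · have hμ : 0 < tsMu T t := sub_pos.2 ((le_tsSigma T t).lt_of_ne' hσ)
    obtain ⟨x, rfl, -, hfx⟩ := hpos (A := {t})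
      (by simpa only [h.deltaMeasure_singleton (h.tsTk_subset ht), ne_eq, ENNReal.ofReal_eq_zero,
        not_le])
    exact hfx

lemma IsRightDenseContinuous.add_setIntegral_Ici_eq_zero [NormedSpace ℝ F] [ProperSpace F]
    {p q : ℝ → F} (h : IsCompactTimeScale T a b) (hp : IsRightDenseContinuous T p)
    (hq : IsRightDenseContinuous T q)
    (H : ∀ φ : ℝ → ℝ, Continuous φ → HasCompactSupport φ →
      ∫ t, ((∫ s in Iic t, φ s ∂deltaMeasure T a b) • p t + φ t • q t) ∂deltaMeasure T a b = 0)
    (ht : t ∈ tsTk T) : q t + ∫ s in Ici t, p s ∂deltaMeasure T a b = 0 := by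
  have hpi := hp.integrable h
  have hP : IsRightDenseContinuous T fun t ↦ ∫ s in Ici t, p s ∂deltaMeasure T a b := by
    simp only [setIntegral_Ici_deltaMeasure hpi]
    exact .of_continuousOn h (continuousOn_const.sub (continuousOn_deltaPrimitive h hp))
  exact (hq.add h hP).eq_zero_of_ae h (ae_add_setIntegral_Ici_eq_zero hpi (hq.integrable h) H) ht

lemma hasDerivAt_integral_deltaMeasure {Z : Type*} [NormedAddCommGroup Z]
    [ProperSpace Z] [NormedSpace ℝ F] {z : ℝ → Z} {Φ Φ' : ℝ × ℝ × Z → F}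
    (h : IsCompactTimeScale T a b) (hz : IsRightDenseContinuous T z)
    (hΦ : ContinuousOn Φ (univ ×ˢ T ×ˢ univ)) (hΦ' : ContinuousOn Φ' (univ ×ˢ T ×ˢ univ))
    (hderiv : ∀ ε, ∀ t ∈ T, ∀ w, HasDerivAt (fun ε ↦ Φ (ε, t, w)) (Φ' (ε, t, w)) ε) (ε₀ : ℝ) :
    HasDerivAt (fun ε ↦ ∫ t, Φ (ε, t, z t) ∂deltaMeasure T a b)
      (∫ t, Φ' (ε₀, t, z t) ∂deltaMeasure T a b) ε₀ := by
  have hcomp {Ψ : ℝ × ℝ × Z → F} (hΨ : ContinuousOn Ψ (univ ×ˢ T ×ˢ univ)) (ε : ℝ) :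
      Integrable (fun t ↦ Ψ (ε, t, z t)) (deltaMeasure T a b) :=
    (hz.comp_continuousOn h (Φ := fun p ↦ Ψ (ε, p))
      (hΨ.comp (by fun_prop) fun _ hp ↦ ⟨trivial, hp⟩)).integrable h
  have hK : IsCompact (Metric.closedBall ε₀ 1 ×ˢ T ×ˢ closure (z '' tsTk T)) :=
    (isCompact_closedBall ε₀ 1).prod (h.isCompact.prod hz.isBounded.isCompact_closure)
  obtain ⟨C, hC⟩ := hK.exists_bound_of_continuousOn
    (hΦ'.mono (prod_mono (subset_univ _) (prod_mono_right (subset_univ _))))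
  refine (hasDerivAt_integral_of_dominated_loc_of_deriv_le (F := fun ε t ↦ Φ (ε, t, z t))
    (F' := fun ε t ↦ Φ' (ε, t, z t)) (bound := fun _ ↦ C)
    (Metric.closedBall_mem_nhds ε₀ one_pos)
    (.of_forall fun ε ↦ (hcomp hΦ ε).aestronglyMeasurable) (hcomp hΦ ε₀)
    (hcomp hΦ' ε₀).aestronglyMeasurable ?_ (integrable_const C) ?_).2
  · filter_upwards [h.ae_mem_tsTk] with t ht ε hε
    exact hC _ ⟨hε, h.tsTk_subset ht, subset_closure (mem_image_of_mem z ht)⟩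
  · filter_upwards [h.ae_mem_tsTk] with t ht ε _
    exact hderiv ε t (h.tsTk_subset ht) (z t)

end TimeScale

/-! ### Variations of the sigma-form functional -/

section Variations

variable {E : Type*} [NormedAddCommGroup E] [InnerProductSpace ℝ E] [ProperSpace E]
  {T : Set ℝ} {a b t : ℝ} {L : ℝ → E → E → ℝ} {Ly Lv : ℝ → E → E → E} {ys yds η ηd : ℝ → E}

/-- `L(t, y, v)` is a Lagrangian on `T`, continuous and with continuous partial gradients `Ly` in
`y` and `Lv` in `v`. -/
structure IsC1Lagrangian (T : Set ℝ) (L : ℝ → E → E → ℝ) (Ly Lv : ℝ → E → E → E) : Prop where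
  continuousOn : ContinuousOn (fun p : ℝ × E × E ↦ L p.1 p.2.1 p.2.2) (T ×ˢ univ)
  hasGradientAt_fst : ∀ t ∈ T, ∀ y v, HasGradientAt (fun z ↦ L t z v) (Ly t y v) y
  hasGradientAt_snd : ∀ t ∈ T, ∀ y v, HasGradientAt (fun z ↦ L t y z) (Lv t y v) v
  continuousOn_fst : ContinuousOn (fun p : ℝ × E × E ↦ Ly p.1 p.2.1 p.2.2) (T ×ˢ univ)
  continuousOn_snd : ContinuousOn (fun p : ℝ × E × E ↦ Lv p.1 p.2.1 p.2.2) (T ×ˢ univ)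

/-- `ys`, with delta derivative `yds`, minimizes `∫_a^b L(t, y(σ(t)), y^Δ(t)) Δt` locally in the
`‖·‖_{1,∞}` norm among the `y ∈ C¹_rd(T)` with `y a = ys a`. The two delta integrals are the
increments of arbitrary delta antiderivatives `F` and `G` of the integrands. -/
def IsWeakLocalMinimizer (T : Set ℝ) (a b : ℝ) (L : ℝ → E → E → ℝ) (ys yds : ℝ → E) : Prop :=
  ∃ δ > 0, ∀ y yd : ℝ → E, C1rd T y yd → y a = ys a →
    tsSupNorm (tsTk T) (fun t ↦ y t - ys t) + tsSupNorm (tsTk T) (fun t ↦ yd t - yds t) < δ →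
    ∀ F G : ℝ → ℝ,
      IsDeltaAntideriv T (fun t ↦ L t (ys (tsSigma T t)) (yds t)) F →
      IsDeltaAntideriv T (fun t ↦ L t (y (tsSigma T t)) (yd t)) G →
      F b - F a ≤ G b - G a

lemma IsC1Lagrangian.hasDerivAt (hL : IsC1Lagrangian T L Ly Lv) (ht : t ∈ T) (y v x w : E)
    (ε : ℝ) :
    HasDerivAt (fun ε : ℝ ↦ L t (y + ε • x) (v + ε • w))
      (⟪Ly t (y + ε • x) (v + ε • w), x⟫_ℝ + ⟪Lv t (y + ε • x) (v + ε • w), w⟫_ℝ) ε := by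
  have hslice {G : ℝ → E → E → E}
      (hG : ContinuousOn (fun p : ℝ × E × E ↦ G p.1 p.2.1 p.2.2) (T ×ˢ univ)) :
      Continuous fun p : E × E ↦ InnerProductSpace.toDual ℝ E (G t p.1 p.2) :=
    (InnerProductSpace.toDual ℝ E).continuous.comp <|
      hG.comp_continuous (f := fun p : E × E ↦ (t, p)) (by fun_prop) fun _ ↦ ⟨ht, trivial⟩
  have hFD := hasStrictFDerivAt_uncurry_coprod (u := (y + ε • x, v + ε • w)) (f := L t)
    (f₁ := fun y v ↦ InnerProductSpace.toDual ℝ E (Ly t y v))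
    (f₂ := fun y v ↦ InnerProductSpace.toDual ℝ E (Lv t y v))
    (.of_forall fun p ↦ (hL.hasGradientAt_fst t ht p.1 p.2).hasFDerivAt)
    (.of_forall fun p ↦ (hL.hasGradientAt_snd t ht p.1 p.2).hasFDerivAt)
    (hslice hL.continuousOn_fst).continuousAt (hslice hL.continuousOn_snd).continuousAt
  have hline (u z : E) : HasDerivAt (fun ε : ℝ ↦ u + ε • z) z ε := by
    simpa only [one_smul, id] using ((hasDerivAt_id ε).smul_const z).const_add u
  exact hFD.hasFDerivAt.comp_hasDerivAt ε ((hline y x).prodMk (hline v w))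

lemma IsC1Lagrangian.hasDerivAt_integral (hL : IsC1Lagrangian T L Ly Lv)
    (h : IsCompactTimeScale T a b) (hys : C1rd T ys yds) (hη : C1rd T η ηd) :
    HasDerivAt (fun ε : ℝ ↦ ∫ t, L t (ys (tsSigma T t) + ε • η (tsSigma T t)) (yds t + ε • ηd t)
        ∂deltaMeasure T a b)
      (∫ t, (⟪Ly t (ys (tsSigma T t)) (yds t), η (tsSigma T t)⟫_ℝ +
        ⟪Lv t (ys (tsSigma T t)) (yds t), ηd t⟫_ℝ) ∂deltaMeasure T a b) 0 := by
  have hmaps : MapsTo (fun p : ℝ × ℝ × (E × E) × (E × E) ↦ (p.2.1, p.2.2.1 + p.1 • p.2.2.2))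
    (univ ×ˢ T ×ˢ univ) (T ×ˢ univ) := fun p hp ↦ ⟨hp.2.1, trivial⟩
  have hderiv := hasDerivAt_integral_deltaMeasure h
    (Z := (E × E) × (E × E))
    (Φ := fun p ↦ L p.2.1 (p.2.2.1.1 + p.1 • p.2.2.2.1) (p.2.2.1.2 + p.1 • p.2.2.2.2))
    (Φ' := fun p ↦
      ⟪Ly p.2.1 (p.2.2.1.1 + p.1 • p.2.2.2.1) (p.2.2.1.2 + p.1 • p.2.2.2.2), p.2.2.2.1⟫_ℝ +
      ⟪Lv p.2.1 (p.2.2.1.1 + p.1 • p.2.2.2.1) (p.2.2.1.2 + p.1 • p.2.2.2.2), p.2.2.2.2⟫_ℝ)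
    ((hys.isRightDenseContinuous_prodMk h).prodMk (hη.isRightDenseContinuous_prodMk h))
    (hL.continuousOn.comp (by fun_prop) hmaps)
    (((hL.continuousOn_fst.comp (by fun_prop) hmaps).inner (by fun_prop)).add
      ((hL.continuousOn_snd.comp (by fun_prop) hmaps).inner (by fun_prop)))
    (fun ε t ht w ↦ hL.hasDerivAt ht w.1.1 w.1.2 w.2.1 w.2.2 ε) 0
  simpa only [zero_smul, add_zero] using hderiv

lemma IsC1Lagrangian.isDeltaAntideriv (hL : IsC1Lagrangian T L Ly Lv)
    (h : IsCompactTimeScale T a b) (hη : C1rd T η ηd) :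
    IsDeltaAntideriv T (fun t ↦ L t (η (tsSigma T t)) (ηd t))
      (deltaPrimitive T a b fun t ↦ L t (η (tsSigma T t)) (ηd t)) :=
  isDeltaAntideriv_deltaPrimitive h <|
    (hη.isRightDenseContinuous_prodMk h).comp_continuousOn h hL.continuousOn

lemma IsWeakLocalMinimizer.isLocalMin (hmin : IsWeakLocalMinimizer T a b L ys yds)
    (hL : IsC1Lagrangian T L Ly Lv) (h : IsCompactTimeScale T a b) (hys : C1rd T ys yds)
    (hη : C1rd T η ηd) (hηa : η a = 0) :
    IsLocalMin (fun ε : ℝ ↦ ∫ t, L t (ys (tsSigma T t) + ε • η (tsSigma T t)) (yds t + ε • ηd t)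
      ∂deltaMeasure T a b) 0 := by
  obtain ⟨δ, hδ, hmin⟩ := hmin
  obtain ⟨C, hC⟩ := (IsRightDenseContinuous.of_continuousOn h
    ((hη.continuousOn h).mono h.tsTk_subset)).exists_norm_le
  obtain ⟨D, hD⟩ := (hη.2.isRightDenseContinuous h).exists_norm_le
  have hC0 : 0 ≤ C := (norm_nonneg _).trans (hC _ h.tsRho_mem_tsTk)
  have hD0 : 0 ≤ D := (norm_nonneg _).trans (hD _ h.tsRho_mem_tsTk)
  have hsmall : ∀ᶠ ε : ℝ in 𝓝 0, |ε| * C + |ε| * D < δ :=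
    (show Continuous fun ε : ℝ ↦ |ε| * C + |ε| * D by fun_prop).continuousAt.eventually_lt
      continuousAt_const (by simpa)
  filter_upwards [hsmall] with ε hε
  have hy : C1rd T (ys + ε • η) (yds + ε • ηd) := hys.add (hη.const_smul ε)
  have hnorm {f g : ℝ → E} {B : ℝ} (hB : 0 ≤ B) (hg : ∀ t ∈ tsTk T, ‖g t‖ ≤ B) :
      tsSupNorm (tsTk T) (fun t ↦ (f + ε • g) t - f t) ≤ |ε| * B := by
    refine tsSupNorm_le (mul_nonneg (abs_nonneg ε) hB) fun t ht ↦ ?_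
    rw [Pi.add_apply, add_sub_cancel_left, Pi.smul_apply, norm_smul, Real.norm_eq_abs]
    exact mul_le_mul_of_nonneg_left (hg t ht) (abs_nonneg ε)
  have hle := hmin _ _ hy (by simp [hηa]) ((add_le_add (hnorm hC0 hC) (hnorm hD0 hD)).trans_lt hε)
    _ _ (hL.isDeltaAntideriv h hys) (hL.isDeltaAntideriv h hy)
  simpa only [deltaPrimitive_left h, deltaPrimitive_right h, sub_zero, Pi.add_apply, Pi.smul_apply,
    zero_smul, add_zero] using hle

lemma IsWeakLocalMinimizer.integral_inner_eq_zero (hmin : IsWeakLocalMinimizer T a b L ys yds)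
    (hL : IsC1Lagrangian T L Ly Lv) (h : IsCompactTimeScale T a b) (hys : C1rd T ys yds)
    (hη : C1rd T η ηd) (hηa : η a = 0) :
    ∫ t, (⟪Ly t (ys (tsSigma T t)) (yds t), η (tsSigma T t)⟫_ℝ +
      ⟪Lv t (ys (tsSigma T t)) (yds t), ηd t⟫_ℝ) ∂deltaMeasure T a b = 0 :=
  (hmin.isLocalMin hL h hys hη hηa).hasDerivAt_eq_zero (hL.hasDerivAt_integral h hys hη)

lemma IsWeakLocalMinimizer.integral_smul_eq_zero (hmin : IsWeakLocalMinimizer T a b L ys yds)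
    (hL : IsC1Lagrangian T L Ly Lv) (h : IsCompactTimeScale T a b) (hys : C1rd T ys yds)
    {φ : ℝ → ℝ} (hφ : Continuous φ) :
    ∫ t, ((∫ s in Iic t, φ s ∂deltaMeasure T a b) • Ly t (ys (tsSigma T t)) (yds t) +
      φ t • Lv t (ys (tsSigma T t)) (yds t)) ∂deltaMeasure T a b = 0 := by
  simp only [← deltaPrimitive_tsSigma h]
  have hψ : C1rd T (deltaPrimitive T a b φ) φ := c1rd_deltaPrimitive h hφ.continuousOn
  have hz := hys.isRightDenseContinuous_prodMk h
  have hint := (((IsRightDenseContinuous.comp_tsSigma h (hψ.continuousOn h)).smul h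
    (hz.comp_continuousOn h hL.continuousOn_fst)).add h
    ((IsRightDenseContinuous.of_continuousOn h hφ.continuousOn).smul h
    (hz.comp_continuousOn h hL.continuousOn_snd))).integrable h
  refine ext_inner_left ℝ fun w ↦ ?_
  have hψw : C1rd T (deltaPrimitive T a b fun t ↦ φ t • w) (fun t ↦ φ t • w) :=
    c1rd_deltaPrimitive h (by fun_prop)
  have hzero := hmin.integral_inner_eq_zero hL h hys hψw (deltaPrimitive_left h _)
  rw [← integral_inner hint, inner_zero_right, ← hzero]
  simp only [deltaPrimitive, integral_smul_const, inner_add_right, inner_smul_right,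
    real_inner_comm w]

lemma IsWeakLocalMinimizer.add_setIntegral_Ici_eq_zero
    (hmin : IsWeakLocalMinimizer T a b L ys yds) (hL : IsC1Lagrangian T L Ly Lv)
    (h : IsCompactTimeScale T a b) (hys : C1rd T ys yds) (ht : t ∈ tsTk T) :
    Lv t (ys (tsSigma T t)) (yds t) +
      ∫ s in Ici t, Ly s (ys (tsSigma T s)) (yds s) ∂deltaMeasure T a b = 0 :=
  have hz := hys.isRightDenseContinuous_prodMk h
  IsRightDenseContinuous.add_setIntegral_Ici_eq_zero h
    (hz.comp_continuousOn h hL.continuousOn_fst) (hz.comp_continuousOn h hL.continuousOn_snd)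
    (fun _ hφ _ ↦ hmin.integral_smul_eq_zero hL h hys hφ) ht

theorem transversality_sigma_form_right_endpoint_free_general
    (h : IsCompactTimeScale T a b) (hL : IsC1Lagrangian T L Ly Lv) (hys : C1rd T ys yds)
    (hmin : IsWeakLocalMinimizer T a b L ys yds) :
    tsMu T (tsRho T b) • Ly (tsRho T b) (ys b) (yds (tsRho T b))
      + Lv (tsRho T b) (ys b) (yds (tsRho T b)) = 0 := by
  have hρ := hmin.add_setIntegral_Ici_eq_zero hL h hys h.tsRho_mem_tsTk
  rwa [setIntegral_congr_set h.Ici_tsRho_ae_eq_singleton,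
    integral_singleton_deltaMeasure h h.tsRho_mem, h.tsSigma_tsRho, add_comm] at hρ

end Variations

theorem transversality_sigma_form_right_endpoint_free
    {n : ℕ} (hn : 1 ≤ n)
    (T₀ : Set ℝ) (hT₀closed : IsClosed T₀)
    (a b : ℝ) (ha : a ∈ T₀) (hb : b ∈ T₀) (hab : a < b)
    (T : Set ℝ) (hT : T = Icc a b ∩ T₀)
    (hT3 : ∃ c ∈ T, c ≠ a ∧ c ≠ b)
    (L : ℝ → En n → En n → ℝ) (Ly Lv : ℝ → En n → En n → En n)
    (hLc : ContinuousOn (fun p : ℝ × En n × En n => L p.1 p.2.1 p.2.2)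
      (T ×ˢ (univ : Set (En n × En n))))
    (hLC2 : ∀ t ∈ T, ContDiff ℝ 2 (fun p : En n × En n => L t p.1 p.2))
    (hLy : ∀ t ∈ T, ∀ y v : En n, HasGradientAt (fun z => L t z v) (Ly t y v) y)
    (hLv : ∀ t ∈ T, ∀ y v : En n, HasGradientAt (fun z => L t y z) (Lv t y v) v)
    (hLyc : ContinuousOn (fun p : ℝ × En n × En n => Ly p.1 p.2.1 p.2.2)
      (T ×ˢ (univ : Set (En n × En n))))
    (hLvc : ContinuousOn (fun p : ℝ × En n × En n => Lv p.1 p.2.1 p.2.2)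
      (T ×ˢ (univ : Set (En n × En n))))
    (ys yds : ℝ → En n) (hys : C1rd T ys yds)
    (hmin : ∃ δ > 0, ∀ y yd : ℝ → En n, C1rd T y yd →
      y a = ys a →
      tsSupNorm (tsTk T) (fun t => y t - ys t)
        + tsSupNorm (tsTk T) (fun t => yd t - yds t) < δ →
      ∀ F G : ℝ → ℝ,
        IsDeltaAntideriv T (fun t => L t (ys (tsSigma T t)) (yds t)) F →
        IsDeltaAntideriv T (fun t => L t (y (tsSigma T t)) (yd t)) G →
        F b - F a ≤ G b - G a) :
    tsMu T (tsRho T b) • Ly (tsRho T b) (ys b) (yds (tsRho T b))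
      + Lv (tsRho T b) (ys b) (yds (tsRho T b)) = 0 := by
  subst hT
  have h : IsCompactTimeScale (Icc a b ∩ T₀) a b :=
    ⟨isCompact_Icc.inter_right hT₀closed, ⟨⟨left_mem_Icc.2 hab.le, ha⟩, fun _ ht ↦ ht.1.1⟩,
      ⟨⟨right_mem_Icc.2 hab.le, hb⟩, fun _ ht ↦ ht.1.2⟩, hab⟩
  exact transversality_sigma_form_right_endpoint_free_general h ⟨hLc, hLy, hLv, hLyc, hLvc⟩ hys hmin
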